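/- The Hermitian unital design of order 4 — the 2-(65,5,1) design whose points are the 65 points of H = { [x : y : z] ∈ PG(2,16) : x⁵ + y⁵ + z⁵ = 0 } and whose blocks are the intersections H ∩ ℓ over lines ℓ of PG(2,16) meeting H in 5 points — has exactly 4304 parallel classes. -/

import Mathlib

noncomputable section

/-- The field `GF(16)` of 16 elements. -/
abbrev K16 := GaloisField 2 4

/-- The 3-dimensional vector space over `GF(16)`. -/
abbrev V16 := Fin 3 → K16

/-- The point set of the Desarguesian projective plane `PG(2,16)`:
1-dimensional subspaces of the 3-dimensional vector space over `GF(16)`. -/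
abbrev PG216 := Projectivization K16 V16

/-- The Hermitian set `H = { [x : y : z] ∈ PG(2,16) : x⁵ + y⁵ + z⁵ = 0 }`.
(The defining condition is invariant under scalar multiplication, so it may be
evaluated on the chosen representative of each point.) -/
def HermitianSet : Set PG216 :=
  {p | p.rep 0 ^ 5 + p.rep 1 ^ 5 + p.rep 2 ^ 5 = 0}
/-- The blocks of the Hermitian unital design: intersections of the Hermitian set with
lines of `PG(2,16)` meeting it in 5 points, viewed as subsets of the Hermitian set. -/
def hermitianBlocks : Set (Set ↥HermitianSet) :=
  {b | ∃ W : Submodule K16 V16, Module.finrank K16 W = 2 ∧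
        b = {x : ↥HermitianSet | x.1.submodule ≤ W} ∧ b.ncard = 5}

/-! Label the elements of `GF(16)` by the numbers below `16` and hence the points of the unital by
numbers. Parallel classes then become exact covers of a set of 65 numbers by the 208 blocks. The
point `p` of a set `S` lies in exactly one member `b` of each exact cover of `S`, and deleting `b`
leaves an exact cover of `S \ b`, so the number of exact covers of `S` is the sum, over the blocks
`b` with `p ∈ b ⊆ S`, of the number of exact covers of `S \ b`. This recursion is evaluated on
bitmasks. The condition that a parallel class has 13 members is automatic, since the blocks have 5
points each and `13 * 5 = 65`. -/

section ExactCover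

open scoped Finset

variable {α : Type*} [DecidableEq α] {B : Finset (Finset α)} {S b : Finset α} {p : α}
  {T : Finset (Finset α)}

open Classical in
/-- The exact covers of `S` by `B`: the sets of pairwise disjoint members of `B` with union `S`. -/
def exactCovers (B : Finset (Finset α)) (S : Finset α) : Finset (Finset (Finset α)) :=
  {T ∈ B.powerset | (T : Set (Finset α)).PairwiseDisjoint id ∧ T.biUnion id = S}

theorem mem_exactCovers :
    T ∈ exactCovers B S ↔
      T ⊆ B ∧ (T : Set (Finset α)).PairwiseDisjoint id ∧ T.biUnion id = S := by
  simp [exactCovers]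

theorem subset_of_mem_of_mem_exactCovers (hT : T ∈ exactCovers B S) (hb : b ∈ T) : b ⊆ S :=
  (mem_exactCovers.mp hT).2.2 ▸ Finset.subset_biUnion_of_mem id hb

theorem exactCovers_empty (hB : ∅ ∉ B) : exactCovers B ∅ = {∅} := by
  refine Finset.eq_singleton_iff_unique_mem.mpr ⟨by simp [mem_exactCovers], fun T hT ↦ ?_⟩
  refine Finset.eq_empty_of_forall_notMem fun b hb ↦ hB ?_
  exact Finset.subset_empty.mp (subset_of_mem_of_mem_exactCovers hT hb) ▸
    (mem_exactCovers.mp hT).1 hb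

theorem exactCovers_filter_notMem (hp : p ∉ S) :
    exactCovers {b ∈ B | p ∉ b} S = exactCovers B S := by
  ext T
  refine ⟨fun hT ↦ ?_, fun hT ↦ ?_⟩
  · have ⟨hTB, hT'⟩ := mem_exactCovers.mp hT
    exact mem_exactCovers.mpr ⟨hTB.trans (Finset.filter_subset _ _), hT'⟩
  · have ⟨hTB, hT'⟩ := mem_exactCovers.mp hT
    refine mem_exactCovers.mpr ⟨fun b hb ↦ Finset.mem_filter.mpr ⟨hTB hb, fun hpb ↦ ?_⟩, hT'⟩
    exact hp (subset_of_mem_of_mem_exactCovers hT hb hpb)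

theorem erase_mem_exactCovers (hT : T ∈ exactCovers B S) (hb : b ∈ T) :
    T.erase b ∈ exactCovers B (S \ b) := by
  obtain ⟨hTB, hdisj, rfl⟩ := mem_exactCovers.mp hT
  refine mem_exactCovers.mpr ⟨(T.erase_subset b).trans hTB,
    hdisj.subset (Finset.coe_subset.mpr (T.erase_subset b)), ?_⟩
  have hrest : Disjoint ((T.erase b).biUnion id) b :=
    (Finset.disjoint_biUnion_left _ _ _).mpr fun c hc ↦
      hdisj (Finset.mem_of_mem_erase hc) hb (Finset.ne_of_mem_erase hc)
  conv_rhs => rw [← Finset.insert_erase hb, Finset.biUnion_insert, id_eq,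
    Finset.union_sdiff_cancel_left hrest.symm]

theorem insert_mem_exactCovers (hb : b ∈ B) (hbS : b ⊆ S) (hT : T ∈ exactCovers B (S \ b)) :
    insert b T ∈ exactCovers B S := by
  have ⟨hTB, hdisj, hTS⟩ := mem_exactCovers.mp hT
  refine mem_exactCovers.mpr ⟨Finset.insert_subset hb hTB, ?_, ?_⟩
  · rw [Finset.coe_insert]
    exact hdisj.insert fun c hc _ ↦
      Finset.disjoint_sdiff.mono_right (subset_of_mem_of_mem_exactCovers hT hc)
  · rw [Finset.biUnion_insert, hTS, id_eq, Finset.union_sdiff_of_subset hbS]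

theorem card_filter_mem_exactCovers (hb : b ∈ B) (hb0 : b.Nonempty) (hbS : b ⊆ S) :
    #{T ∈ exactCovers B S | b ∈ T} = #(exactCovers B (S \ b)) := by
  have notMem {T} (hT : T ∈ exactCovers B (S \ b)) : b ∉ T := fun hbT ↦
    hb0.ne_empty (Finset.disjoint_self_iff_empty b |>.mp
      (Finset.sdiff_disjoint.mono_left (subset_of_mem_of_mem_exactCovers hT hbT)))
  refine Finset.card_nbij' (·.erase b) (insert b) ?_ ?_ ?_ ?_
  · exact fun T hT ↦ erase_mem_exactCovers (Finset.mem_filter.mp hT).1 (Finset.mem_filter.mp hT).2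
  · exact fun T hT ↦ Finset.mem_filter.mpr
      ⟨insert_mem_exactCovers hb hbS hT, Finset.mem_insert_self b T⟩
  · exact fun T hT ↦ Finset.insert_erase (Finset.mem_filter.mp hT).2
  · exact fun T hT ↦ Finset.erase_insert (notMem hT)

theorem existsUnique_mem_of_mem_exactCovers (hT : T ∈ exactCovers B S) (hp : p ∈ S) :
    ∃! b ∈ T, p ∈ b := by
  obtain ⟨-, hdisj, rfl⟩ := mem_exactCovers.mp hT
  obtain ⟨b, hbT, hpb⟩ := Finset.mem_biUnion.mp hp
  exact ⟨b, ⟨hbT, hpb⟩, fun c hc ↦ hdisj.elim_finset hc.1 hbT p hc.2 hpb⟩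

theorem card_exactCovers_of_mem (hp : p ∈ S) :
    #(exactCovers B S) = ∑ b ∈ B with p ∈ b ∧ b ⊆ S, #(exactCovers B (S \ b)) := by
  have unique_block {T} (hT : T ∈ exactCovers B S) :
      #{b ∈ {b ∈ B | p ∈ b ∧ b ⊆ S} | b ∈ T} = 1 := by
    obtain ⟨b, ⟨hbT, hpb⟩, hb⟩ := existsUnique_mem_of_mem_exactCovers hT hp
    refine Finset.card_eq_one.mpr ⟨b, Finset.eq_singleton_iff_unique_mem.mpr ⟨?_, ?_⟩⟩
    · simp [(mem_exactCovers.mp hT).1 hbT, hpb, subset_of_mem_of_mem_exactCovers hT hbT, hbT]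
    · exact fun c hc ↦ hb c (by simp_all)
  calc #(exactCovers B S)
      = ∑ T ∈ exactCovers B S, #{b ∈ {b ∈ B | p ∈ b ∧ b ⊆ S} | b ∈ T} := by
        rw [Finset.sum_congr rfl fun T hT ↦ unique_block hT, Finset.card_eq_sum_ones]
    _ = ∑ b ∈ B with p ∈ b ∧ b ⊆ S, #{T ∈ exactCovers B S | b ∈ T} :=
        Finset.sum_card_bipartiteAbove_eq_sum_card_bipartiteBelow fun T b ↦ b ∈ T
    _ = ∑ b ∈ B with p ∈ b ∧ b ⊆ S, #(exactCovers B (S \ b)) := by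
        refine Finset.sum_congr rfl fun b hb ↦ ?_
        obtain ⟨hbB, hpb, hbS⟩ := Finset.mem_filter.mp hb
        exact card_filter_mem_exactCovers hbB ⟨p, hpb⟩ hbS

end ExactCover

section ParallelClass

open scoped Finset

variable {X α : Type*}

theorem ncard_mul_of_forall_ncard_eq [Finite X] {C : Set (Set X)} {k : ℕ}
    (hk : ∀ b ∈ C, b.ncard = k) (hdisj : C.Pairwise Disjoint) (hcover : ⋃₀ C = Set.univ) :
    C.ncard * k = Nat.card X := by
  calc C.ncard * k = ∑ᶠ b ∈ C, b.ncard := by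
        rw [finsum_mem_congr rfl hk, finsum_mem_eq_finite_toFinset_sum _ C.toFinite,
          Finset.sum_const, smul_eq_mul, Set.ncard_eq_toFinset_card C]
    _ = (⋃₀ C).ncard := by
        rw [Set.sUnion_eq_biUnion, C.toFinite.ncard_biUnion (fun b _ ↦ b.toFinite) hdisj]
    _ = Nat.card X := by rw [hcover, Set.ncard_univ]

theorem disjoint_preimage_iff_of_subset_range {f : X → α} {s t : Set α} (hs : s ⊆ Set.range f) :
    Disjoint (f ⁻¹' s) (f ⁻¹' t) ↔ Disjoint s t := by
  refine ⟨fun h ↦ Set.disjoint_left.mpr fun a has hat ↦ ?_, fun h ↦ h.preimage f⟩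
  obtain ⟨x, rfl⟩ := hs has
  exact Set.disjoint_left.mp h has hat

theorem preimage_eq_univ_iff_of_subset_range {f : X → α} {s : Set α} (hs : s ⊆ Set.range f) :
    f ⁻¹' s = Set.univ ↔ s = Set.range f := by
  rw [Set.preimage_eq_univ_iff, hs.ge_iff_eq', eq_comm]

variable {B : Finset (Finset α)} {S : Finset α} {f : X → α}

theorem injOn_preimage_coe (hS : Set.range f = S) (hB : ∀ b ∈ B, b ⊆ S) :
    Set.InjOn (fun b : Finset α ↦ f ⁻¹' b) B := fun b hb c hc hbc ↦
  Finset.coe_injective ((Set.preimage_eq_preimage' (hS ▸ hB b hb) (hS ▸ hB c hc)).mp hbc)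

theorem pairwise_disjoint_image_preimage_iff (hS : Set.range f = S) (hB : ∀ b ∈ B, b ⊆ S) :
    ((fun b : Finset α ↦ f ⁻¹' b) '' B).Pairwise Disjoint ↔
      (B : Set (Finset α)).PairwiseDisjoint id := by
  rw [(injOn_preimage_coe hS hB).pairwise_image]
  refine forall₂_congr fun b hb ↦ forall₂_congr fun c _ ↦ imp_congr_right fun _ ↦ ?_
  exact (disjoint_preimage_iff_of_subset_range (hS ▸ hB b hb)).trans Finset.disjoint_coe

variable [DecidableEq α]

theorem sUnion_image_preimage_eq_univ_iff (hS : Set.range f = S) (hB : ∀ b ∈ B, b ⊆ S) :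
    ⋃₀ ((fun b : Finset α ↦ f ⁻¹' b) '' B) = Set.univ ↔ B.biUnion id = S := by
  have hunion : ⋃₀ ((fun b : Finset α ↦ f ⁻¹' b) '' B) = f ⁻¹' (B.biUnion id : Finset α) := by
    simp [Set.sUnion_image]
  have hsub : ((B.biUnion id : Finset α) : Set α) ⊆ Set.range f :=
    hS ▸ Finset.coe_subset.mpr (Finset.biUnion_subset.mpr hB)
  rw [hunion, preimage_eq_univ_iff_of_subset_range hsub, hS, Finset.coe_inj]

theorem ncard_parallelClasses_eq_card_exactCovers (hS : Set.range f = S) (hB : ∀ b ∈ B, b ⊆ S) :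
    {C : Set (Set X) | C ⊆ (fun b : Finset α ↦ f ⁻¹' b) '' B ∧ C.Pairwise Disjoint ∧
      ⋃₀ C = Set.univ}.ncard = #(exactCovers B S) := by
  set pre : Finset α → Set X := fun b ↦ f ⁻¹' b
  have hT {T : Finset (Finset α)} (hTB : T ⊆ B) : ∀ b ∈ T, b ⊆ S := fun b hb ↦ hB b (hTB hb)
  have himage : {C : Set (Set X) | C ⊆ pre '' B ∧ C.Pairwise Disjoint ∧ ⋃₀ C = Set.univ} =
      (fun T : Finset (Finset α) ↦ pre '' T) '' exactCovers B S := by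
    ext C
    constructor
    · rintro ⟨hCB, hdisj, hcover⟩
      obtain ⟨T, hTB, rfl⟩ := Set.subset_image_iff.mp hCB
      lift T to Finset (Finset α) using B.finite_toSet.subset hTB
      rw [Finset.coe_subset] at hTB
      exact ⟨T, mem_exactCovers.mpr ⟨hTB,
        (pairwise_disjoint_image_preimage_iff hS (hT hTB)).mp hdisj,
        (sUnion_image_preimage_eq_univ_iff hS (hT hTB)).mp hcover⟩, rfl⟩
    · rintro ⟨T, hTcover, rfl⟩
      obtain ⟨hTB, hdisj, hcover⟩ := mem_exactCovers.mp hTcover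
      exact ⟨Set.image_mono hTB, (pairwise_disjoint_image_preimage_iff hS (hT hTB)).mpr hdisj,
        (sUnion_image_preimage_eq_univ_iff hS (hT hTB)).mpr hcover⟩
  have hinj : Set.InjOn (fun T : Finset (Finset α) ↦ pre '' T) (exactCovers B S) :=
    fun T hT T' hT' h ↦ Finset.coe_injective <|
      ((injOn_preimage_coe hS hB).image_eq_image_iff
        (mem_exactCovers.mp hT).1 (mem_exactCovers.mp hT').1).mp h
  rw [himage, hinj.ncard_image, Set.ncard_coe_finset]

end ParallelClass

section BitmaskSearch

open scoped Finset

/-- The set of exponents occurring in the binary expansion of `m`; the natural number `m` is the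
bitmask encoding this set. -/
def bitSet (m : ℕ) : Finset ℕ := Finset.equivBitIndices m

theorem mem_bitSet {i m : ℕ} : i ∈ bitSet m ↔ m.testBit i := by
  simp [bitSet]

theorem bitSet_injective : Function.Injective bitSet := Finset.equivBitIndices.injective

theorem bitSet_zero : bitSet 0 = ∅ := by simp [bitSet]

theorem bitSet_land (a b : ℕ) : bitSet (a &&& b) = bitSet a ∩ bitSet b := by
  ext i
  simp [mem_bitSet]

theorem bitSet_xor_of_subset {a b : ℕ} (h : bitSet b ⊆ bitSet a) :
    bitSet (a ^^^ b) = bitSet a \ bitSet b := by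
  ext i
  have hi : b.testBit i → a.testBit i := fun hb ↦ mem_bitSet.mp (h (mem_bitSet.mpr hb))
  simp only [mem_bitSet, Finset.mem_sdiff, Nat.testBit_xor]
  grind

/-- The bitmask encoding the set of members of a list without duplicates. -/
def bitmask (l : List ℕ) : ℕ := (l.map (2 ^ ·)).sum

theorem bitSet_bitmask {l : List ℕ} (hl : l.Nodup) : bitSet (bitmask l) = l.toFinset := by
  rw [bitmask, ← List.sum_toFinset _ hl]
  exact Finset.equivBitIndices.apply_symm_apply l.toFinset

theorem land_eq_left_iff_bitSet_subset {a b : ℕ} : a &&& b = a ↔ bitSet a ⊆ bitSet b := by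
  rw [← bitSet_injective.eq_iff, bitSet_land, Finset.inter_eq_left]

theorem two_pow_land_eq_zero_iff {p a : ℕ} : 2 ^ p &&& a = 0 ↔ p ∉ bitSet a := by
  simp [Nat.two_pow_and, mem_bitSet]

/-- Counts the exact covers of the set encoded by the bitmask `S` by sets encoded in the list
`blocks`, branching at each step on the block containing the first uncovered member of `points`.
Explicit recursors and `Nat.beq` make the evaluation of large instances feasible. -/
def countCovers (points : List ℕ) : List ℕ → ℕ → ℕ :=
  points.rec (fun _ _ ↦ 1) fun p _ count blocks S ↦
    bif (2 ^ p &&& S).beq 0 then count (blocks.filter (!·.testBit p)) S else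
      (blocks.filter (·.testBit p)).rec 0 fun b _ n ↦
        bif (b &&& S).beq b then (count (blocks.filter (!·.testBit p)) (S ^^^ b)).add n else n

theorem rec_cond_add_eq_sum (l : List ℕ) (c : ℕ → Bool) (f : ℕ → ℕ) :
    (l.rec 0 fun b _ n ↦ bif c b then (f b).add n else n : ℕ) = ((l.filter c).map f).sum := by
  induction l with
  | nil => rfl
  | cons b l ih => cases h : c b <;> simp_all

theorem countCovers_cons_of_notMem {p S : ℕ} (points blocks : List ℕ) (hp : p ∉ bitSet S) :
    countCovers (p :: points) blocks S =
      countCovers points (blocks.filter (!·.testBit p)) S := by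
  have htest : (2 ^ p &&& S).beq 0 = true := Nat.beq_eq.mpr (two_pow_land_eq_zero_iff.mpr hp)
  change (bif (2 ^ p &&& S).beq 0 then _ else _) = _
  rw [htest, cond_true]
  rfl

theorem countCovers_cons_of_mem {p S : ℕ} (points blocks : List ℕ) (hp : p ∈ bitSet S) :
    countCovers (p :: points) blocks S =
      (((blocks.filter (·.testBit p)).filter fun b ↦ (b &&& S).beq b).map fun b ↦
        countCovers points (blocks.filter (!·.testBit p)) (S ^^^ b)).sum := by
  have htest : (2 ^ p &&& S).beq 0 = false := by
    rw [Bool.eq_false_iff, ne_eq, Nat.beq_eq, two_pow_land_eq_zero_iff]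
    exact not_not_intro hp
  rw [← rec_cond_add_eq_sum]
  change (bif (2 ^ p &&& S).beq 0 then _ else _) = _
  rw [htest, cond_false]
  rfl

theorem image_bitSet_filter_not_testBit (blocks : List ℕ) (p : ℕ) :
    (blocks.filter (!·.testBit p)).toFinset.image bitSet =
      {b ∈ blocks.toFinset.image bitSet | p ∉ b} := by
  ext s
  simp only [Finset.mem_image, Finset.mem_filter, List.mem_toFinset, List.mem_filter]
  constructor
  · rintro ⟨m, ⟨hm, hmp⟩, rfl⟩
    exact ⟨⟨m, hm, rfl⟩, by simpa [mem_bitSet] using hmp⟩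
  · rintro ⟨⟨m, hm, rfl⟩, hmp⟩
    exact ⟨m, ⟨hm, by simpa [mem_bitSet] using hmp⟩, rfl⟩

theorem sum_filter_image_bitSet {blocks : List ℕ} (hnodup : blocks.Nodup) (p S : ℕ)
    (f : Finset ℕ → ℕ) :
    ∑ b ∈ blocks.toFinset.image bitSet with p ∈ b ∧ b ⊆ bitSet S, f b =
      (((blocks.filter (·.testBit p)).filter fun b ↦ (b &&& S).beq b).map (f ∘ bitSet)).sum := by
  rw [Finset.filter_image, Finset.sum_image bitSet_injective.injOn,
    ← List.sum_toFinset _ ((hnodup.filter _).filter _)]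
  refine Finset.sum_congr ?_ fun _ _ ↦ rfl
  ext b
  simp [mem_bitSet, land_eq_left_iff_bitSet_subset, and_comm]

theorem countCovers_eq_card_exactCovers {points blocks : List ℕ} {S : ℕ} (hnodup : blocks.Nodup)
    (hzero : 0 ∉ blocks) (hS : bitSet S ⊆ points.toFinset) :
    countCovers points blocks S = #(exactCovers (blocks.toFinset.image bitSet) (bitSet S)) := by
  induction points generalizing blocks S with
  | nil =>
    have hempty : ∅ ∉ blocks.toFinset.image bitSet := by
      rw [← bitSet_zero, bitSet_injective.mem_finset_image]
      simpa using hzero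
    rw [Finset.subset_empty.mp hS, exactCovers_empty hempty]
    rfl
  | cons p points ih =>
    have count_tail {S' : ℕ} (hS' : bitSet S' ⊆ bitSet S) (hpS' : p ∉ bitSet S') :
        countCovers points (blocks.filter (!·.testBit p)) S' =
          #(exactCovers (blocks.toFinset.image bitSet) (bitSet S')) := by
      rw [ih (hnodup.filter _) (fun h ↦ hzero (List.mem_of_mem_filter h)) ?_,
        image_bitSet_filter_not_testBit, exactCovers_filter_notMem hpS']
      intro i hi
      have hip : i ≠ p := fun h ↦ hpS' (h ▸ hi)
      simpa [hip] using hS (hS' hi)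
    by_cases hp : p ∈ bitSet S
    · rw [countCovers_cons_of_mem _ _ hp, card_exactCovers_of_mem hp,
        sum_filter_image_bitSet hnodup]
      congr 1
      refine List.map_congr_left fun b hb ↦ ?_
      obtain ⟨-, hbS, hpb⟩ : b ∈ blocks ∧ b &&& S = b ∧ b.testBit p := by simpa using hb
      have hsdiff := bitSet_xor_of_subset (land_eq_left_iff_bitSet_subset.mp hbS)
      rw [Function.comp_apply, ← hsdiff]
      refine count_tail (hsdiff ▸ Finset.sdiff_subset) ?_
      rw [hsdiff]
      exact fun h ↦ (Finset.mem_sdiff.mp h).2 (mem_bitSet.mpr hpb)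
    · rw [countCovers_cons_of_notMem _ _ hp, count_tail subset_rfl hp]

end BitmaskSearch

section NormalizedVector

open scoped Matrix

variable {K ι : Type*} [Field K]

/-- A vector is normalized if its first nonzero coordinate is `1`. Normalized vectors serve as
homogeneous coordinates, one for each point of the projective space and one for each hyperplane. -/
def IsNormalized [LT ι] (v : ι → K) : Prop := ∃ i, v i = 1 ∧ ∀ j < i, v j = 0

theorem IsNormalized.ne_zero [LT ι] {v : ι → K} (hv : IsNormalized v) : v ≠ 0 := by
  obtain ⟨i, hi, -⟩ := hv
  exact fun h ↦ one_ne_zero (hi.symm.trans (congrFun h i))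

theorem exists_isNormalized_smul [LinearOrder ι] [WellFoundedLT ι] {v : ι → K} (hv : v ≠ 0) :
    ∃ c : K, c ≠ 0 ∧ IsNormalized (c • v) := by
  obtain ⟨i, hi, hmin⟩ := WellFounded.has_min wellFounded_lt {i | v i ≠ 0} (Function.ne_iff.mp hv)
  refine ⟨(v i)⁻¹, inv_ne_zero hi, i, inv_mul_cancel₀ hi, fun j hj ↦ ?_⟩
  rw [Pi.smul_apply, not_not.mp fun h ↦ hmin j h hj, smul_zero]

theorem IsNormalized.eq_of_span_singleton_eq [LinearOrder ι] {v w : ι → K} (hv : IsNormalized v)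
    (hw : IsNormalized w) (hvw : K ∙ v = K ∙ w) : v = w := by
  obtain ⟨c, rfl⟩ := Submodule.span_singleton_eq_span_singleton.mp hvw
  obtain ⟨i, hvi, hi⟩ := hv
  obtain ⟨j, hwj, hj⟩ := hw
  obtain rfl : i = j := by
    rcases lt_trichotomy i j with hij | rfl | hij
    · exact absurd (hj i hij) (by simp [Units.smul_def, hvi])
    · rfl
    · exact absurd hwj (by simp [hi j hij])
  have hc : c = 1 := by simpa [Units.smul_def, hvi] using hwj
  rw [hc, one_smul]

theorem exists_isNormalized_submodule_eq [LinearOrder ι] [WellFoundedLT ι]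
    (p : Projectivization K (ι → K)) : ∃ v : ι → K, IsNormalized v ∧ p.submodule = K ∙ v := by
  obtain ⟨c, hc, hv⟩ := exists_isNormalized_smul p.rep_nonzero
  refine ⟨c • p.rep, hv, ?_⟩
  rw [Submodule.span_singleton_smul_eq (IsUnit.mk0 c hc), p.submodule_eq]

variable [Fintype ι]

theorem finrank_ker_dotProductEquiv_add_one [DecidableEq ι] {a : ι → K} (ha : a ≠ 0) :
    Module.finrank K (LinearMap.ker (dotProductEquiv K ι a)) + 1 = Fintype.card ι := by
  have hf : dotProductEquiv K ι a ≠ 0 := (LinearEquiv.map_ne_zero_iff _).mpr ha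
  rw [Module.Dual.finrank_ker_add_one_of_ne_zero hf, Module.finrank_pi]

theorem exists_dotProduct_eq_zero_iff_mem {W : Submodule K (ι → K)}
    (hW : Module.finrank K W + 1 = Fintype.card ι) :
    ∃ a : ι → K, a ≠ 0 ∧ ∀ v, v ∈ W ↔ a ⬝ᵥ v = 0 := by
  classical
  have hlt : W < ⊤ := lt_top_iff_ne_top.mpr fun h ↦ by
    rw [h, finrank_top, Module.finrank_pi] at hW
    exact Nat.succ_ne_self _ hW
  obtain ⟨f, hf, hWf⟩ := Submodule.exists_le_ker_of_lt_top W hlt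
  obtain ⟨a, rfl⟩ := (dotProductEquiv K ι).surjective f
  have ha : a ≠ 0 := fun h ↦ hf (by rw [h, map_zero])
  have hker : W = LinearMap.ker (dotProductEquiv K ι a) :=
    Submodule.eq_of_le_of_finrank_eq hWf <| Nat.add_right_cancel <|
      hW.trans (finrank_ker_dotProductEquiv_add_one ha).symm
  exact ⟨a, ha, fun v ↦ by rw [hker, LinearMap.mem_ker, dotProductEquiv_apply_apply]⟩

theorem exists_isNormalized_dotProduct_eq_zero_iff_mem [LinearOrder ι] {W : Submodule K (ι → K)}
    (hW : Module.finrank K W + 1 = Fintype.card ι) :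
    ∃ a : ι → K, IsNormalized a ∧ ∀ v, v ∈ W ↔ a ⬝ᵥ v = 0 := by
  obtain ⟨a, ha, haW⟩ := exists_dotProduct_eq_zero_iff_mem hW
  obtain ⟨c, hc, hca⟩ := exists_isNormalized_smul ha
  exact ⟨c • a, hca, fun v ↦ by simp [haW, hc]⟩

end NormalizedVector

theorem exists_pow_four_eq_add_one {K : Type*} [Field K] [CharP K 2] (hK : Nat.card K = 16) :
    ∃ g : K, g ^ 4 = g + 1 := by
  have : Finite K := Nat.finite_of_card_ne_zero (by omega)
  obtain ⟨u, hu⟩ := IsCyclic.exists_ofOrder_eq_natCard (α := Kˣ)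
  replace hu : orderOf u = 15 := by rw [hu, Nat.card_units, hK]
  have pow_ne_one {k : ℕ} (hk : ¬ 15 ∣ k) : (u : K) ^ k ≠ 1 := fun h ↦
    hk (hu ▸ orderOf_dvd_of_pow_eq_one (Units.ext (by simpa using h)))
  have h15 : (u : K) ^ 15 = 1 := by
    rw [← Units.val_pow_eq_pow_val, ← hu, pow_orderOf_eq_one, Units.val_one]
  have h3 := sub_ne_zero.mpr (pow_ne_one (k := 3) (by norm_num))
  have h5 := sub_ne_zero.mpr (pow_ne_one (k := 5) (by norm_num))
  have two_eq_zero : (2 : K) = 0 := CharTwo.two_eq_zero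
  have hfactor : ((u : K) ^ 4 + u + 1) * (u ^ 4 + u ^ 3 + 1) = 0 := by
    -- Modulo `2`, `(u³ - 1)(u⁵ - 1)(u⁴ + u + 1)(u⁴ + u³ + 1) = (u - 1)(u¹⁵ - 1)`.
    refine (mul_eq_zero_iff_left (mul_ne_zero h3 h5)).mp ?_
    linear_combination ((u : K) - 1) * h15 +
      (u + u ^ 4 - u ^ 6 - u ^ 7 - u ^ 9 - u ^ 10 + u ^ 12 + u ^ 15) * two_eq_zero
  rcases mul_eq_zero.mp hfactor with h | h
  · exact ⟨u, by linear_combination h - (u + 1) * two_eq_zero⟩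
  · refine ⟨(u : K)⁻¹, ?_⟩
    field_simp
    linear_combination h - (u ^ 3 + u ^ 4) * two_eq_zero

section BinaryCode

variable {R : Type*} [CommRing R] (g : R)

/-- The value at `g` of the polynomial whose coefficients are the binary digits of `n`. For a root
`g` of `X⁴ + X + 1` in characteristic `2`, the numbers below `16` thereby encode `GF(16)`. -/
def binEval (n : ℕ) : R := Nat.ofDigits g (Nat.digits 2 n)

theorem binEval_zero : binEval g 0 = 0 := by simp [binEval, Nat.ofDigits]

theorem binEval_one : binEval g 1 = 1 := by simp [binEval, Nat.ofDigits]

theorem binEval_eq (n : ℕ) : binEval g n = (n % 2 : ℕ) + g * binEval g (n / 2) := by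
  rcases eq_or_ne n 0 with rfl | hn
  · simp [binEval, Nat.ofDigits]
  · rw [binEval, Nat.digits_eq_cons_digits_div one_lt_two hn, Nat.ofDigits, binEval]

theorem binEval_two_mul (n : ℕ) : binEval g (2 * n) = g * binEval g n := by
  rw [binEval_eq, Nat.mul_mod_right, Nat.mul_div_cancel_left n two_pos, Nat.cast_zero, zero_add]

theorem binEval_mod_two_mul (b a : ℕ) :
    binEval g (b % 2 * a) = (b % 2 : ℕ) * binEval g a := by
  rcases Nat.mod_two_eq_zero_or_one b with h | h <;> simp [h, binEval_zero]

theorem binEval_xor [CharP R 2] (a b : ℕ) : binEval g (a ^^^ b) = binEval g a + binEval g b := by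
  induction a using Nat.strong_induction_on generalizing b with
  | _ a ih =>
    rcases Nat.eq_zero_or_pos a with rfl | ha
    · rw [Nat.zero_xor, binEval_zero, zero_add]
    · have hdigit : (((a ^^^ b) % 2 : ℕ) : R) = (a % 2 : ℕ) + (b % 2 : ℕ) := by
        rw [Nat.xor_mod_two_eq, ← CharP.cast_eq_mod R 2, ← CharP.cast_eq_mod R 2,
          ← CharP.cast_eq_mod R 2, Nat.cast_add]
      rw [binEval_eq, Nat.xor_div_two, ih _ (Nat.div_lt_self ha one_lt_two), hdigit,
        binEval_eq g a, binEval_eq g b]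
      ring

/-- Multiplication by the root of `X⁴ + X + 1` on binary codes; `19`, in binary `10011`, encodes
`X⁴ + X + 1`. -/
def mulRoot (a : ℕ) : ℕ := 2 * a ^^^ a / 8 % 2 * 19

/-- The product of binary codes of elements of `GF(16)`, by Horner's scheme in the bits of `b`. -/
def gfMul (a b : ℕ) : ℕ :=
  b % 2 * a ^^^ mulRoot (b / 2 % 2 * a ^^^ mulRoot (b / 4 % 2 * a ^^^ mulRoot (b / 8 % 2 * a)))

theorem gfMul_lt : ∀ a < 16, ∀ b < 16, gfMul a b < 16 := by decide

/-- Powers of binary codes of elements of `GF(16)`. -/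
def gfPow (a : ℕ) : ℕ → ℕ
  | 0 => 1
  | k + 1 => gfMul (gfPow a k) a

theorem gfPow_lt {a : ℕ} (ha : a < 16) (k : ℕ) : gfPow a k < 16 := by
  induction k with
  | zero => norm_num [gfPow]
  | succ k ih => exact gfMul_lt _ ih _ ha

variable {g} [CharP R 2] (hg : g ^ 4 = g + 1)
include hg

theorem binEval_mulRoot (a : ℕ) : binEval g (mulRoot a) = g * binEval g a := by
  have h19 : binEval g 19 = 0 := by
    have : binEval g 19 = 1 + g + g ^ 4 := by norm_num [binEval, Nat.ofDigits]; ring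
    rw [this, hg, ← add_comm g, CharTwo.add_self_eq_zero]
  rw [mulRoot, binEval_xor, binEval_two_mul, binEval_mod_two_mul, h19, mul_zero, add_zero]

theorem binEval_gfMul {a b : ℕ} (hb : b < 16) :
    binEval g (gfMul a b) = binEval g a * binEval g b := by
  have hb16 : b / 2 / 2 / 2 / 2 = 0 := by omega
  have h4 : b / 2 / 2 = b / 4 := by omega
  have h8 : b / 4 / 2 = b / 8 := by omega
  rw [binEval_eq g b, binEval_eq g (b / 2), binEval_eq g (b / 2 / 2), binEval_eq g (b / 2 / 2 / 2),
    hb16, h4, h8, binEval_zero]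
  simp only [gfMul, binEval_xor, binEval_mulRoot hg, binEval_mod_two_mul]
  ring

theorem binEval_gfPow {a : ℕ} (ha : a < 16) (k : ℕ) :
    binEval g (gfPow a k) = binEval g a ^ k := by
  induction k with
  | zero => rw [gfPow, binEval_one, pow_zero]
  | succ k ih => rw [gfPow, binEval_gfMul hg ha, ih, pow_succ]

theorem binEval_eq_zero_iff {a : ℕ} (ha : a < 16) : binEval g a = 0 ↔ a = 0 := by
  refine ⟨fun h ↦ by_contra fun ha0 ↦ ?_, fun h ↦ h ▸ binEval_zero g⟩
  have exists_inv : ∀ a < 16, a ≠ 0 → ∃ b < 16, gfMul a b = 1 := by decide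
  obtain ⟨b, hb, hab⟩ := exists_inv a ha ha0
  have one_eq_zero : (1 : R) = 0 := by
    rw [← binEval_one g, ← hab, binEval_gfMul hg hb, h, zero_mul]
  have : Nontrivial R := CharP.nontrivial_of_char_ne_one (v := 2) (by norm_num)
  exact one_ne_zero one_eq_zero

theorem binEval_injOn : Set.InjOn (binEval g) (Set.Iio 16) := fun a ha b hb hab ↦ by
  have hxor : a ^^^ b < 2 ^ 4 := Nat.xor_lt_two_pow ha hb
  rw [← Nat.xor_eq_zero_iff, ← binEval_eq_zero_iff hg hxor, binEval_xor, hab,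
    CharTwo.add_self_eq_zero]

theorem exists_binEval_eq (hR : Nat.card R = 16) (x : R) : ∃ a < 16, binEval g a = x := by
  have : Finite R := Nat.finite_of_card_ne_zero (by omega)
  have hbij : Function.Bijective fun a : Set.Iio 16 ↦ binEval g a :=
    (binEval_injOn hg).injective.bijective_of_nat_card_le (by simp [hR])
  obtain ⟨⟨a, ha⟩, rfl⟩ := hbij.surjective x
  exact ⟨a, ha, rfl⟩

end BinaryCode

section CodeVector

open scoped Matrix

variable {K : Type*} [Field K] (g : K)

/-- The vector with coordinates encoded by the three hexadecimal digits of `n`. -/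
def codeVec (n : ℕ) : Fin 3 → K :=
  ![binEval g (n / 256), binEval g (n / 16 % 16), binEval g (n % 16)]

theorem codeVec_add {b c : ℕ} (a : ℕ) (hb : b < 16) (hc : c < 16) :
    codeVec g (256 * a + 16 * b + c) = ![binEval g a, binEval g b, binEval g c] := by
  have hhigh : (256 * a + 16 * b + c) / 256 = a := by omega
  have hmid : (256 * a + 16 * b + c) / 16 % 16 = b := by omega
  have hlow : (256 * a + 16 * b + c) % 16 = c := by omega
  rw [codeVec, hhigh, hmid, hlow]

/-- The codes of the normalized vectors. The scrambled order roughly halves the number of nodes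
of the search in `countCovers_blockCodes`. -/
def normalizedCodes : List ℕ :=
  ((List.range 512).map (501 * · % 512)).filter fun n ↦ n = 1 ∨ n / 16 = 1 ∨ n / 256 = 1

theorem mem_normalizedCodes {n : ℕ} :
    n ∈ normalizedCodes ↔ n = 1 ∨ n / 16 = 1 ∨ n / 256 = 1 := by
  simp only [normalizedCodes, List.mem_filter, List.mem_map, List.mem_range, decide_eq_true_eq,
    and_iff_right_iff_imp]
  intro hn
  -- `93` is the inverse of `501` modulo `512`.
  exact ⟨93 * n % 512, by omega, by omega⟩

theorem lt_of_mem_normalizedCodes {n : ℕ} (hn : n ∈ normalizedCodes) : n < 4096 := by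
  rw [mem_normalizedCodes] at hn
  omega

theorem isNormalized_codeVec {n : ℕ} (hn : n ∈ normalizedCodes) :
    IsNormalized (codeVec g n) := by
  rcases mem_normalizedCodes.mp hn with rfl | h | h
  · exact ⟨2, by simp [codeVec, binEval_one], by simp [Fin.forall_fin_succ, codeVec, binEval_zero]⟩
  · have h0 : n / 256 = 0 := by omega
    exact ⟨1, by simp [codeVec, h, binEval_one], by simp [codeVec, h0, binEval_zero]⟩
  · exact ⟨0, by simp [codeVec, h, binEval_one], by simp⟩

/-- The dot product of code vectors, on binary codes. -/
def gfDot (a n : ℕ) : ℕ :=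
  gfMul (a / 256) (n / 256) ^^^ gfMul (a / 16 % 16) (n / 16 % 16) ^^^ gfMul (a % 16) (n % 16)

/-- The Hermitian form of a code vector, on binary codes. -/
def gfHermitian (n : ℕ) : ℕ :=
  gfPow (n / 256) 5 ^^^ gfPow (n / 16 % 16) 5 ^^^ gfPow (n % 16) 5

variable {g} [CharP K 2] (hg : g ^ 4 = g + 1)
include hg

theorem codeVec_injOn : Set.InjOn (codeVec g) (Set.Iio 4096) := fun m hm n hn h ↦ by
  rw [Set.mem_Iio] at hm hn
  simp only [codeVec, Matrix.vecCons_inj, and_true] at h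
  have hhigh := binEval_injOn hg (Set.mem_Iio.mpr (by omega)) (Set.mem_Iio.mpr (by omega)) h.1
  have hmid := binEval_injOn hg (Set.mem_Iio.mpr (by omega)) (Set.mem_Iio.mpr (by omega)) h.2.1
  have hlow := binEval_injOn hg (Set.mem_Iio.mpr (by omega)) (Set.mem_Iio.mpr (by omega)) h.2.2
  omega

theorem exists_codeVec_eq_of_isNormalized (hK : Nat.card K = 16) {v : Fin 3 → K}
    (hv : IsNormalized v) : ∃ n ∈ normalizedCodes, codeVec g n = v := by
  obtain ⟨b, hb, hvb⟩ := exists_binEval_eq hg hK (v 1)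
  obtain ⟨c, hc, hvc⟩ := exists_binEval_eq hg hK (v 2)
  have hsplit : v = ![v 0, v 1, v 2] := by ext i; fin_cases i <;> rfl
  obtain ⟨i, hi, hlt⟩ := hv
  fin_cases i
  · refine ⟨256 * 1 + 16 * b + c, mem_normalizedCodes.mpr (by omega), ?_⟩
    rw [codeVec_add g 1 hb hc, hvb, hvc, binEval_one, hsplit, show v 0 = 1 from hi]
    rfl
  · refine ⟨256 * 0 + 16 * 1 + c, mem_normalizedCodes.mpr (by omega), ?_⟩
    rw [codeVec_add g 0 (by norm_num) hc, hvc, binEval_zero, binEval_one, hsplit,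
      show v 1 = 1 from hi, hlt 0 (by decide)]
    rfl
  · refine ⟨256 * 0 + 16 * 0 + 1, mem_normalizedCodes.mpr (by omega), ?_⟩
    rw [codeVec_add g 0 (by norm_num) (by norm_num), binEval_zero, binEval_one, hsplit,
      show v 2 = 1 from hi, hlt 0 (by decide), hlt 1 (by decide)]

theorem gfDot_eq_zero_iff {a n : ℕ} (ha : a < 4096) (hn : n < 4096) :
    gfDot a n = 0 ↔ codeVec g a ⬝ᵥ codeVec g n = 0 := by
  have hlt : gfDot a n < 2 ^ 4 := Nat.xor_lt_two_pow (Nat.xor_lt_two_pow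
    (gfMul_lt _ (by omega) _ (by omega)) (gfMul_lt _ (by omega) _ (by omega)))
    (gfMul_lt _ (by omega) _ (by omega))
  have heval : binEval g (gfDot a n) = codeVec g a ⬝ᵥ codeVec g n := by
    rw [gfDot, binEval_xor, binEval_xor, binEval_gfMul hg (by omega), binEval_gfMul hg (by omega),
      binEval_gfMul hg (by omega), codeVec, codeVec, Matrix.vec3_dotProduct']
  rw [← heval, binEval_eq_zero_iff hg hlt]

theorem gfHermitian_eq_zero_iff {n : ℕ} (hn : n < 4096) :
    gfHermitian n = 0 ↔
      codeVec g n 0 ^ 5 + codeVec g n 1 ^ 5 + codeVec g n 2 ^ 5 = 0 := by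
  have hlt : gfHermitian n < 2 ^ 4 := Nat.xor_lt_two_pow (Nat.xor_lt_two_pow
    (gfPow_lt (by omega) 5) (gfPow_lt (by omega) 5)) (gfPow_lt (by omega) 5)
  rw [← binEval_eq_zero_iff hg hlt, gfHermitian, binEval_xor, binEval_xor,
    binEval_gfPow hg (by omega), binEval_gfPow hg (by omega), binEval_gfPow hg (by omega)]
  rfl

end CodeVector

section HermitianUnital

open scoped Finset Matrix

theorem card_K16 : Nat.card K16 = 16 := GaloisField.card 2 4 (by norm_num)

/-- A root of `X⁴ + X + 1` in `GF(16)`, with respect to which the elements have binary codes. -/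
def generator : K16 := Classical.choose (exists_pow_four_eq_add_one card_K16)

theorem generator_pow_four : generator ^ 4 = generator + 1 :=
  Classical.choose_spec (exists_pow_four_eq_add_one card_K16)

/-- The codes of the points of the Hermitian set. -/
def pointCodes : List ℕ := normalizedCodes.filter (gfHermitian · = 0)

/-- The points of the Hermitian set on the line with coordinates encoded by `a`, as codes. -/
def lineSection (a : ℕ) : List ℕ := pointCodes.filter (gfDot a · = 0)

/-- The blocks of the Hermitian unital design, as lists of point codes. -/
def blockCodes : List (List ℕ) :=
  (normalizedCodes.map lineSection).filter (·.length = 5)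

theorem nodup_pointCodes : pointCodes.Nodup := by decide +kernel

theorem length_pointCodes : pointCodes.length = 65 := by decide +kernel

theorem mem_hermitianSet_iff_of_submodule_eq {p : PG216} {v : V16} (hp : p.submodule = K16 ∙ v) :
    p ∈ HermitianSet ↔ v 0 ^ 5 + v 1 ^ 5 + v 2 ^ 5 = 0 := by
  rw [p.submodule_eq] at hp
  obtain ⟨c, rfl⟩ := Submodule.span_singleton_eq_span_singleton.mp hp
  have hscale : (c • p.rep) 0 ^ 5 + (c • p.rep) 1 ^ 5 + (c • p.rep) 2 ^ 5 =
      (c : K16) ^ 5 * (p.rep 0 ^ 5 + p.rep 1 ^ 5 + p.rep 2 ^ 5) := by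
    simp only [Units.smul_def, Pi.smul_apply, smul_eq_mul]
    ring
  rw [hscale, mul_eq_zero_iff_left (pow_ne_zero 5 c.ne_zero)]
  rfl

theorem mem_pointCodes {n : ℕ} :
    n ∈ pointCodes ↔ n ∈ normalizedCodes ∧
      codeVec generator n 0 ^ 5 + codeVec generator n 1 ^ 5 + codeVec generator n 2 ^ 5 = 0 := by
  rw [pointCodes, List.mem_filter, decide_eq_true_eq]
  exact and_congr_right fun hn ↦
    gfHermitian_eq_zero_iff generator_pow_four (lt_of_mem_normalizedCodes hn)

theorem exists_mem_pointCodes (x : HermitianSet) :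
    ∃ n ∈ pointCodes, x.1.submodule = K16 ∙ codeVec generator n := by
  obtain ⟨v, hv, hxv⟩ := exists_isNormalized_submodule_eq x.1
  obtain ⟨n, hn, rfl⟩ := exists_codeVec_eq_of_isNormalized generator_pow_four card_K16 hv
  exact ⟨n, mem_pointCodes.mpr ⟨hn, (mem_hermitianSet_iff_of_submodule_eq hxv).mp x.2⟩, hxv⟩

/-- The code of the normalized homogeneous coordinates of a point of the Hermitian set. -/
def pointCode (x : HermitianSet) : ℕ := Classical.choose (exists_mem_pointCodes x)

theorem pointCode_mem (x : HermitianSet) : pointCode x ∈ pointCodes :=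
  (Classical.choose_spec (exists_mem_pointCodes x)).1

theorem submodule_eq_span_codeVec_pointCode (x : HermitianSet) :
    x.1.submodule = K16 ∙ codeVec generator (pointCode x) :=
  (Classical.choose_spec (exists_mem_pointCodes x)).2

theorem pointCode_injective : Function.Injective pointCode := fun x y h ↦
  Subtype.ext <| Projectivization.submodule_injective <| by
    rw [submodule_eq_span_codeVec_pointCode, submodule_eq_span_codeVec_pointCode, h]

theorem range_pointCode : Set.range pointCode = pointCodes.toFinset := by
  ext n
  rw [SetLike.mem_coe, List.mem_toFinset]
  refine ⟨fun ⟨x, hx⟩ ↦ hx ▸ pointCode_mem x, fun hn ↦ ?_⟩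
  obtain ⟨hnorm, hform⟩ := mem_pointCodes.mp hn
  have hv := isNormalized_codeVec generator hnorm
  have hspan := Projectivization.submodule_mk (K := K16) _ hv.ne_zero
  let x : HermitianSet := ⟨_, (mem_hermitianSet_iff_of_submodule_eq hspan).mpr hform⟩
  have hx := (mem_pointCodes.mp (pointCode_mem x)).1
  refine ⟨x, codeVec_injOn generator_pow_four (lt_of_mem_normalizedCodes hx)
    (lt_of_mem_normalizedCodes hnorm) ?_⟩
  refine (isNormalized_codeVec generator hx).eq_of_span_singleton_eq hv ?_
  rw [← submodule_eq_span_codeVec_pointCode, hspan]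

theorem ncard_preimage_pointCode {s : Finset ℕ} (hs : s ⊆ pointCodes.toFinset) :
    (pointCode ⁻¹' s).ncard = #s := by
  rw [Set.ncard_preimage_of_injective_subset_range pointCode_injective
    (range_pointCode ▸ Finset.coe_subset.mpr hs), Set.ncard_coe_finset]

theorem card_hermitianSet : Nat.card HermitianSet = 65 := by
  rw [← Set.ncard_univ, ← Set.preimage_range pointCode, range_pointCode,
    ncard_preimage_pointCode subset_rfl, List.toFinset_card_of_nodup nodup_pointCodes,
    length_pointCodes]

theorem nodup_lineSection (a : ℕ) : (lineSection a).Nodup := nodup_pointCodes.filter _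

theorem lineSection_toFinset_subset (a : ℕ) : (lineSection a).toFinset ⊆ pointCodes.toFinset := by
  intro n hn
  rw [lineSection, List.mem_toFinset, List.mem_filter] at hn
  exact List.mem_toFinset.mpr hn.1

theorem ncard_preimage_lineSection (a : ℕ) :
    (pointCode ⁻¹' (lineSection a).toFinset).ncard = (lineSection a).length := by
  rw [ncard_preimage_pointCode (lineSection_toFinset_subset a),
    List.toFinset_card_of_nodup (nodup_lineSection a)]

theorem setOf_submodule_le_eq_preimage_lineSection {W : Submodule K16 V16} {a : ℕ}
    (ha : a ∈ normalizedCodes) (hW : ∀ v, v ∈ W ↔ codeVec generator a ⬝ᵥ v = 0) :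
    {x : HermitianSet | x.1.submodule ≤ W} = pointCode ⁻¹' (lineSection a).toFinset := by
  ext x
  have hx := pointCode_mem x
  rw [Set.mem_ofPred_eq, submodule_eq_span_codeVec_pointCode, Submodule.span_singleton_le_iff_mem,
    hW, ← gfDot_eq_zero_iff generator_pow_four (lt_of_mem_normalizedCodes ha)
      (lt_of_mem_normalizedCodes (mem_pointCodes.mp hx).1)]
  simp [lineSection, hx]

theorem hermitianBlocks_eq_image_preimage :
    hermitianBlocks = (fun b : Finset ℕ ↦ pointCode ⁻¹' b) ''
      (blockCodes.map List.toFinset).toFinset := by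
  ext b
  simp only [blockCodes, List.coe_toFinset, List.mem_map, List.mem_filter, decide_eq_true_eq,
    Set.mem_image, Set.mem_ofPred_eq]
  constructor
  · rintro ⟨W, hW, rfl, hcard⟩
    obtain ⟨v, hv, hvW⟩ := exists_isNormalized_dotProduct_eq_zero_iff_mem (W := W) (by simp [hW])
    obtain ⟨a, ha, rfl⟩ := exists_codeVec_eq_of_isNormalized generator_pow_four card_K16 hv
    rw [setOf_submodule_le_eq_preimage_lineSection ha hvW, ncard_preimage_lineSection] at hcard
    exact ⟨_, ⟨_, ⟨⟨a, ha, rfl⟩, hcard⟩, rfl⟩,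
      (setOf_submodule_le_eq_preimage_lineSection ha hvW).symm⟩
  · rintro ⟨_, ⟨_, ⟨⟨a, ha, rfl⟩, hlength⟩, rfl⟩, rfl⟩
    refine ⟨LinearMap.ker (dotProductEquiv K16 (Fin 3) (codeVec generator a)), ?_,
      (setOf_submodule_le_eq_preimage_lineSection ha fun v ↦ LinearMap.mem_ker).symm, ?_⟩
    · exact Nat.add_right_cancel <|
        finrank_ker_dotProductEquiv_add_one (isNormalized_codeVec generator ha).ne_zero
    · rw [ncard_preimage_lineSection, hlength]

theorem nodup_of_mem_blockCodes {b : List ℕ} (hb : b ∈ blockCodes) : b.Nodup := by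
  obtain ⟨a, -, rfl⟩ := List.mem_map.mp (List.mem_of_mem_filter hb)
  exact nodup_lineSection a

theorem zero_notMem_map_bitmask_blockCodes : 0 ∉ blockCodes.map bitmask := by
  intro h
  obtain ⟨b, hb, hb0⟩ := List.mem_map.mp h
  have hlength : b.length = 5 := by simpa using (List.mem_filter.mp hb).2
  have hcard : #(bitSet (bitmask b)) = 5 := by
    rw [bitSet_bitmask (nodup_of_mem_blockCodes hb),
      List.toFinset_card_of_nodup (nodup_of_mem_blockCodes hb), hlength]
  simp [hb0, bitSet_zero] at hcard

theorem nodup_map_bitmask_blockCodes : (blockCodes.map bitmask).Nodup := by decide +kernel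

theorem countCovers_blockCodes :
    countCovers pointCodes (blockCodes.map bitmask) (bitmask pointCodes) = 4304 := by
  decide +kernel

theorem image_bitSet_map_bitmask_blockCodes :
    (blockCodes.map bitmask).toFinset.image bitSet = (blockCodes.map List.toFinset).toFinset := by
  ext s
  simp only [Finset.mem_image, List.mem_toFinset, List.mem_map, exists_exists_and_eq_and]
  refine exists_congr fun b ↦ and_congr_right fun hb ↦ ?_
  rw [bitSet_bitmask (nodup_of_mem_blockCodes hb)]

theorem card_exactCovers_blockCodes :
    #(exactCovers (blockCodes.map List.toFinset).toFinset pointCodes.toFinset) = 4304 := by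
  have hfull := bitSet_bitmask nodup_pointCodes
  rw [← image_bitSet_map_bitmask_blockCodes, ← hfull, ← countCovers_eq_card_exactCovers
    nodup_map_bitmask_blockCodes zero_notMem_map_bitmask_blockCodes hfull.subset,
    countCovers_blockCodes]

theorem subset_pointCodes_of_mem_blockCodes {b : Finset ℕ}
    (hb : b ∈ (blockCodes.map List.toFinset).toFinset) : b ⊆ pointCodes.toFinset := by
  obtain ⟨l, hl, rfl⟩ := List.mem_map.mp (List.mem_toFinset.mp hb)
  obtain ⟨a, -, rfl⟩ := List.mem_map.mp (List.mem_of_mem_filter hl)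
  exact lineSection_toFinset_subset a

theorem ncard_eq_thirteen_of_subset_hermitianBlocks {C : Set (Set HermitianSet)}
    (hC : C ⊆ hermitianBlocks) (hdisj : C.Pairwise Disjoint) (hcover : ⋃₀ C = Set.univ) :
    C.ncard = 13 := by
  have : Finite HermitianSet := Nat.finite_of_card_ne_zero (card_hermitianSet ▸ by norm_num)
  have hcard : ∀ b ∈ C, b.ncard = 5 := fun b hb ↦ (hC hb).choose_spec.2.2
  have hcount := ncard_mul_of_forall_ncard_eq hcard hdisj hcover
  rw [card_hermitianSet] at hcount
  omega

end HermitianUnital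

/-- The Hermitian unital design of order 4 has exactly 4304 parallel classes, a parallel
class being a set of 13 pairwise disjoint blocks whose union is the whole point set. -/
theorem hermitian_unital_design_parallel_class_count :
    {C : Set (Set ↥HermitianSet) | C ⊆ hermitianBlocks ∧ C.ncard = 13 ∧
      C.Pairwise Disjoint ∧ ⋃₀ C = Set.univ}.ncard = 4304 := by
  have parallelClass_iff (C : Set (Set HermitianSet)) :
      (C ⊆ hermitianBlocks ∧ C.ncard = 13 ∧ C.Pairwise Disjoint ∧ ⋃₀ C = Set.univ) ↔
        C ⊆ hermitianBlocks ∧ C.Pairwise Disjoint ∧ ⋃₀ C = Set.univ :=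
    and_congr_right fun hC ↦ and_iff_right_of_imp fun ⟨hdisj, hcover⟩ ↦
      ncard_eq_thirteen_of_subset_hermitianBlocks hC hdisj hcover
  simp only [parallelClass_iff]
  rw [hermitianBlocks_eq_image_preimage, ncard_parallelClasses_eq_card_exactCovers range_pointCode
    fun b hb ↦ subset_pointCodes_of_mem_blockCodes hb, card_exactCovers_blockCodes]
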